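/- arXiv:2206.14329 — 8 statements merged into one kernel-verified Lean document; each statement's English description precedes it below -/
import Mathlib

section
/- Let S be a nonempty finite set and let p and q be probability mass functions on S with q(x) > 0 for every x in S. Then the limit as α → 1 of the Rényi cross-entropy H_α(p;q) equals the Shannon cross-entropy H(p;q) = −Σ_{x∈S} p(x) ln q(x). -/
open Filter Topology

/-- For probability mass functions `p` and `q` on a nonempty finite set with `q` everywhere
positive, the Rényi cross-entropy `H_α(p;q) = (1/(1-α)) ln ∑_x p(x) q(x)^(α-1)` tends to the
Shannon cross-entropy `H(p;q) = -∑_x p(x) ln q(x)` as `α → 1`. -/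
theorem renyi_cross_entropy_tendsto_shannon_cross_entropy
    {S : Type*} [Fintype S] [Nonempty S]
    (p q : S → ℝ)
    (hp0 : ∀ x, 0 ≤ p x) (hp1 : ∑ x, p x = 1)
    (hq0 : ∀ x, 0 < q x) (hq1 : ∑ x, q x = 1) :
    Tendsto (fun α : ℝ => (1 / (1 - α)) * Real.log (∑ x, p x * q x ^ (α - 1)))
      (𝓝[≠] (1 : ℝ)) (𝓝 (-∑ x, p x * Real.log (q x))) := by
  have hsum : HasDerivAt (fun α : ℝ => ∑ x, p x * q x ^ (α - 1))
      (∑ x, p x * Real.log (q x)) 1 := by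
    apply HasDerivAt.fun_sum
    intro x _
    have h := (((hasDerivAt_id (1 : ℝ)).sub_const 1).const_rpow (hq0 x)).const_mul (p x)
    simpa using h
  have h1 : ∑ x, p x * q x ^ ((1 : ℝ) - 1) = 1 := by simp [hp1]
  have hlog := hsum.log (by rw [h1]; exact one_ne_zero)
  rw [h1, div_one] at hlog
  have ht := (hasDerivAt_iff_tendsto_slope.mp hlog).neg
  refine ht.congr fun α => ?_
  rw [slope_def_field, h1, Real.log_one, sub_zero, ← neg_sub α 1, one_div, inv_neg]
  ring
end

section
/- Let S be a nonempty finite set and let p and q be probability mass functions on S with q(x) > 0 for every x in S. Then the Rényi cross-entropy is non-increasing in its order: for all α₁, α₂ with 0 < α₁ < α₂, α₁ ≠ 1 and α₂ ≠ 1, one has H_{α₂}(p;q) ≤ H_{α₁}(p;q). -/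
theorem renyi_aux_pos {S : Type*} [Fintype S] (p q : S → ℝ)
    (hp0 : ∀ x, 0 ≤ p x) (hp1 : ∑ x, p x = 1) (hq0 : ∀ x, 0 < q x) (u : ℝ) :
    0 < ∑ x, p x * q x ^ u := by
  obtain ⟨x, -, hx⟩ : ∃ x ∈ Finset.univ, p x ≠ 0 := by
    apply Finset.exists_ne_zero_of_sum_ne_zero
    rw [hp1]; exact one_ne_zero
  exact Finset.sum_pos' (fun y _ => mul_nonneg (hp0 y) (Real.rpow_pos_of_pos (hq0 y) u).le)
    ⟨x, Finset.mem_univ x,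
      mul_pos (lt_of_le_of_ne (hp0 x) hx.symm) (Real.rpow_pos_of_pos (hq0 x) u)⟩

theorem renyi_aux_pow {S : Type*} [Fintype S] (p q : S → ℝ)
    (hp0 : ∀ x, 0 ≤ p x) (hp1 : ∑ x, p x = 1) (hq0 : ∀ x, 0 < q x) (u r : ℝ) (hr : 1 ≤ r) :
    r * Real.log (∑ x, p x * q x ^ u) ≤ Real.log (∑ x, p x * q x ^ (u * r)) := by
  have hpos := renyi_aux_pos p q hp0 hp1 hq0 u
  have h := Real.rpow_arith_mean_le_arith_mean_rpow Finset.univ p (fun x => q x ^ u)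
    (fun x _ => hp0 x) hp1 (fun x _ => (Real.rpow_pos_of_pos (hq0 x) u).le) hr
  rw [← Real.log_rpow hpos]
  apply Real.log_le_log (Real.rpow_pos_of_pos hpos r)
  simpa only [Real.rpow_mul (hq0 _).le] using h

theorem renyi_aux_log {S : Type*} [Fintype S] (p q : S → ℝ)
    (hp0 : ∀ x, 0 ≤ p x) (hp1 : ∑ x, p x = 1) (hq0 : ∀ x, 0 < q x) (u : ℝ) :
    u * ∑ x, p x * Real.log (q x) ≤ Real.log (∑ x, p x * q x ^ u) := by
  have h := strictConcaveOn_log_Ioi.concaveOn.le_map_sum (t := Finset.univ) (w := p)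
    (p := fun x => q x ^ u) (fun x _ => hp0 x) hp1
    (fun x _ => Real.rpow_pos_of_pos (hq0 x) u)
  simp only [smul_eq_mul, Real.log_rpow (hq0 _)] at h
  refine le_trans (le_of_eq ?_) h
  rw [Finset.mul_sum]
  exact Finset.sum_congr rfl fun x _ => by ring

/-- For probability mass functions `p` and `q` on a nonempty finite set with `q` everywhere
positive, the Rényi cross-entropy `H_α(p;q) = (1/(1-α)) ln ∑_x p(x) q(x)^(α-1)` is
non-increasing in the order `α`: if `0 < α₁ < α₂` with `α₁ ≠ 1` and `α₂ ≠ 1`, then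
`H_{α₂}(p;q) ≤ H_{α₁}(p;q)`. -/
theorem renyi_cross_entropy_antitone_in_order
    {S : Type*} [Fintype S] [Nonempty S]
    (p q : S → ℝ)
    (hp0 : ∀ x, 0 ≤ p x) (hp1 : ∑ x, p x = 1)
    (hq0 : ∀ x, 0 < q x) (hq1 : ∑ x, q x = 1)
    (α₁ α₂ : ℝ) (hα₁ : 0 < α₁) (h12 : α₁ < α₂) (hα₁1 : α₁ ≠ 1) (hα₂1 : α₂ ≠ 1) :
    (1 / (1 - α₂)) * Real.log (∑ x, p x * q x ^ (α₂ - 1)) ≤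
      (1 / (1 - α₁)) * Real.log (∑ x, p x * q x ^ (α₁ - 1)) := by
  have key : Real.log (∑ x, p x * q x ^ (α₁ - 1)) / (α₁ - 1) ≤
      Real.log (∑ x, p x * q x ^ (α₂ - 1)) / (α₂ - 1) := by
    have hs0 : α₁ - 1 ≠ 0 := sub_ne_zero.mpr hα₁1
    have ht0 : α₂ - 1 ≠ 0 := sub_ne_zero.mpr hα₂1
    have hst : α₁ - 1 < α₂ - 1 := by linarith
    generalize α₁ - 1 = s at *
    generalize α₂ - 1 = t at *
    rcases lt_or_gt_of_ne hs0 with hs | hs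
    · rcases lt_or_gt_of_ne ht0 with ht | ht
      · have h := renyi_aux_pow p q hp0 hp1 hq0 t (s / t)
          ((one_le_div_of_neg ht).mpr hst.le)
        rw [mul_div_cancel₀ _ ht0] at h
        rw [div_le_iff_of_neg hs]
        calc _ = s / t * Real.log (∑ x, p x * q x ^ t) := by ring
          _ ≤ _ := h
      · have h1 := renyi_aux_log p q hp0 hp1 hq0 s
        have h2 := renyi_aux_log p q hp0 hp1 hq0 t
        refine le_trans (b := ∑ x, p x * Real.log (q x)) ?_ ?_
        · rw [div_le_iff_of_neg hs]; linarith
        · rw [le_div_iff₀ ht]; linarith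
    · have ht : 0 < t := hs.trans hst
      have h := renyi_aux_pow p q hp0 hp1 hq0 s (t / s) ((one_le_div hs).mpr hst.le)
      rw [mul_div_cancel₀ _ hs0] at h
      rw [le_div_iff₀ ht]
      calc _ = t / s * Real.log (∑ x, p x * q x ^ s) := by ring
        _ ≤ _ := h
  have e : ∀ a L : ℝ, 1 / (1 - a) * L = -(L / (a - 1)) := fun a L => by
    rw [← neg_sub a 1, one_div, inv_neg]; ring
  rw [e, e]
  exact neg_le_neg key
end

section
/- Let S be a nonempty finite set and let p and q be probability mass functions on S with p(x) > 0 for every x in S. Then the limit as α → ∞ of the Rényi cross-entropy H_α(p;q) equals −ln q_M, where q_M = max_{x∈S} q(x). -/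
open Filter

/-- For probability mass functions `p` and `q` on a nonempty finite set `S` with `p` everywhere
positive, the Rényi cross-entropy `H_α(p;q) = (1/(1-α)) ln ∑_x p(x) q(x)^(α-1)` tends to
`-ln q_M` as `α → ∞`, where `q_M = max_{x ∈ S} q(x)`.  (For `q(x) = 0` the term `q(x)^(α-1)`
is interpreted as `0`, which is the convention of `Real.rpow` when `α ≠ 1`.) -/
theorem renyi_cross_entropy_tendsto_neg_log_max
    {S : Type*} [Fintype S] [Nonempty S]
    (p q : S → ℝ)
    (hp0 : ∀ x, 0 < p x) (hp1 : ∑ x, p x = 1)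
    (hq0 : ∀ x, 0 ≤ q x) (hq1 : ∑ x, q x = 1) :
    Tendsto (fun α : ℝ => (1 / (1 - α)) * Real.log (∑ x, p x * q x ^ (α - 1)))
      atTop (nhds (-Real.log (Finset.univ.sup' Finset.univ_nonempty q))) := by
  obtain ⟨m, -, hm⟩ := Finset.exists_mem_eq_sup' (Finset.univ_nonempty (α := S)) q
  have hle : ∀ x, q x ≤ q m := fun x => by
    rw [← hm]
    exact Finset.le_sup' q (Finset.mem_univ x)
  rw [hm]
  have hM : 0 < q m := by
    by_contra hneg
    have h0 : ∑ x, q x ≤ 0 := Finset.sum_nonpos fun x _ => (hle x).trans (not_lt.mp hneg)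
    linarith
  have hlim : Tendsto (fun α : ℝ => -Real.log (q m) + -Real.log (p m) / (α - 1)) atTop
      (nhds (-Real.log (q m))) := by
    have h1 : Tendsto (fun α : ℝ => α - 1) atTop atTop :=
      tendsto_atTop_add_const_right _ (-1) tendsto_id
    have h2 := (h1.const_div_atTop (-Real.log (p m))).const_add (-Real.log (q m))
    simpa using h2
  have key : ∀ α : ℝ, 1 < α →
      Real.log (p m) + (α - 1) * Real.log (q m) ≤ Real.log (∑ x, p x * q x ^ (α - 1)) ∧
      Real.log (∑ x, p x * q x ^ (α - 1)) ≤ (α - 1) * Real.log (q m) := by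
    intro α hα
    have hpos : 0 < q m ^ (α - 1) := Real.rpow_pos_of_pos hM _
    have hlow : p m * q m ^ (α - 1) ≤ ∑ x, p x * q x ^ (α - 1) :=
      Finset.single_le_sum (f := fun x => p x * q x ^ (α - 1))
        (fun x _ => mul_nonneg (hp0 x).le (Real.rpow_nonneg (hq0 x) _)) (Finset.mem_univ m)
    have hup : ∑ x, p x * q x ^ (α - 1) ≤ q m ^ (α - 1) := by
      calc ∑ x, p x * q x ^ (α - 1) ≤ ∑ x, p x * q m ^ (α - 1) :=
            Finset.sum_le_sum fun x _ => mul_le_mul_of_nonneg_left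
              (Real.rpow_le_rpow (hq0 x) (hle x) (by linarith)) (hp0 x).le
        _ = q m ^ (α - 1) := by rw [← Finset.sum_mul, hp1, one_mul]
    have hprod := mul_pos (hp0 m) hpos
    rw [← Real.log_rpow hM, ← Real.log_mul (hp0 m).ne' hpos.ne']
    exact ⟨Real.log_le_log hprod hlow, Real.log_le_log (hprod.trans_le hlow) hup⟩
  refine tendsto_of_tendsto_of_tendsto_of_le_of_le' tendsto_const_nhds hlim ?_ ?_
  · filter_upwards [eventually_gt_atTop 1] with α hα
    have h := (key α hα).2
    have hα' : 0 < α - 1 := by linarith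
    rw [show 1 / (1 - α) = -(1 / (α - 1)) by rw [← neg_sub α 1, one_div_neg_eq_neg_one_div],
      neg_mul, neg_le_neg_iff, one_div_mul_eq_div, div_le_iff₀ hα']
    linarith
  · filter_upwards [eventually_gt_atTop 1] with α hα
    have h := (key α hα).1
    have hα' : 0 < α - 1 := by linarith
    rw [show 1 / (1 - α) = -(1 / (α - 1)) by rw [← neg_sub α 1, one_div_neg_eq_neg_one_div],
      neg_mul, one_div_mul_eq_div, neg_div, ← neg_add, neg_le_neg_iff, le_div_iff₀ hα', add_mul,
      div_mul_cancel₀ _ hα'.ne']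
    linarith
end

section
/- Let S ⊆ ℝ^d be a measurable set, b : S → [0,∞) and T : S → ℝ^k measurable functions, A : ℝ^k → ℝ, and α > 0 with α ≠ 1. Let η₁, η₂ ∈ ℝ^k and set η_h := η₁ + (α−1)η₂. Suppose that for each i ∈ {1, 2, h} the function f_i(x) := b(x) exp(η_i · T(x) + A(η_i)) is a probability density on S (nonnegative and integrating to 1), that E_h := ∫_S b(x)^{α−1} f_h(x) dx is finite and strictly positive, and that ∫_S f₁(x) f₂(x)^{α−1} dx is finite and strictly positive. Then h_α(f₁; f₂) = (A(η₁) − A(η_h) + ln E_h)/(1−α) − A(η₂). -/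
open MeasureTheory

/-- An exponential-family density with carrier `b`, sufficient statistic `T`,
log-normalization `A` and natural parameter `η`:  `f(x) = b(x) exp(η ⬝ T(x) + A(η))`. -/
noncomputable def expFamilyDensity {d k : ℕ} (b : (Fin d → ℝ) → ℝ)
    (T : (Fin d → ℝ) → Fin k → ℝ) (A : (Fin k → ℝ) → ℝ) (η : Fin k → ℝ)
    (x : Fin d → ℝ) : ℝ :=
  b x * Real.exp ((∑ i, η i * T x i) + A η)

/-- Rényi differential cross-entropy between two exponential-family densities `f₁, f₂` of the
same type with natural parameters `η₁, η₂`: with `η_h = η₁ + (α-1)η₂` and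
`E_h = ∫_S b(x)^(α-1) f_h(x) dx`, one has
`h_α(f₁;f₂) = (A(η₁) - A(η_h) + ln E_h)/(1-α) - A(η₂)`. -/
theorem renyi_diff_cross_entropy_exponential_family
    {d k : ℕ} (S : Set (Fin d → ℝ)) (hS : MeasurableSet S)
    (b : (Fin d → ℝ) → ℝ) (T : (Fin d → ℝ) → Fin k → ℝ) (A : (Fin k → ℝ) → ℝ)
    (hbmeas : Measurable b) (hTmeas : Measurable T)
    (hbnonneg : ∀ x ∈ S, 0 ≤ b x)
    (α : ℝ) (hα : 0 < α) (hα1 : α ≠ 1)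
    (η₁ η₂ ηh : Fin k → ℝ) (hηh : ηh = η₁ + (α - 1) • η₂)
    (hf₁ : ∫ x in S, expFamilyDensity b T A η₁ x = 1)
    (hf₂ : ∫ x in S, expFamilyDensity b T A η₂ x = 1)
    (hfh : ∫ x in S, expFamilyDensity b T A ηh x = 1)
    (hEh_int : IntegrableOn (fun x => b x ^ (α - 1) * expFamilyDensity b T A ηh x) S)
    (hEh_pos : 0 < ∫ x in S, b x ^ (α - 1) * expFamilyDensity b T A ηh x)
    (hce_int : IntegrableOn
      (fun x => expFamilyDensity b T A η₁ x * expFamilyDensity b T A η₂ x ^ (α - 1)) S)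
    (hce_pos : 0 < ∫ x in S,
      expFamilyDensity b T A η₁ x * expFamilyDensity b T A η₂ x ^ (α - 1)) :
    (1 / (1 - α)) *
        Real.log (∫ x in S, expFamilyDensity b T A η₁ x * expFamilyDensity b T A η₂ x ^ (α - 1)) =
      (A η₁ - A ηh +
          Real.log (∫ x in S, b x ^ (α - 1) * expFamilyDensity b T A ηh x)) / (1 - α) -
        A η₂ := by
  have key : ∫ x in S, expFamilyDensity b T A η₁ x * expFamilyDensity b T A η₂ x ^ (α - 1) =
      Real.exp (A η₁ - A ηh + (α - 1) * A η₂) *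
        ∫ x in S, b x ^ (α - 1) * expFamilyDensity b T A ηh x := by
    rw [← integral_const_mul]
    refine setIntegral_congr_fun hS ?_
    intro x hx
    have hsum : ∑ i, ηh i * T x i = (∑ i, η₁ i * T x i) + (α - 1) * ∑ i, η₂ i * T x i := by
      rw [hηh, Finset.mul_sum, ← Finset.sum_add_distrib]
      refine Finset.sum_congr rfl fun i _ => ?_
      simp only [Pi.add_apply, Pi.smul_apply, smul_eq_mul]
      ring
    simp only [expFamilyDensity]
    rw [hsum, Real.mul_rpow (hbnonneg x hx) (Real.exp_pos _).le, ← Real.exp_mul]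
    have hexp : Real.exp ((∑ i, η₁ i * T x i) + A η₁) *
        Real.exp (((∑ i, η₂ i * T x i) + A η₂) * (α - 1)) =
        Real.exp (A η₁ - A ηh + (α - 1) * A η₂) *
        Real.exp ((∑ i, η₁ i * T x i) + (α - 1) * (∑ i, η₂ i * T x i) + A ηh) := by
      rw [← Real.exp_add, ← Real.exp_add]
      congr 1
      ring
    linear_combination (b x * b x ^ (α - 1)) * hexp
  rw [key, Real.log_mul (Real.exp_pos _).ne' hEh_pos.ne', Real.log_exp]
  have h1 : 1 - α ≠ 0 := sub_ne_zero.mpr hα1.symm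
  field_simp
  ring
end

section
/- Let α > 0, α ≠ 1, let p be the Gaussian density with mean μ₁ and variance σ₁² > 0 and q the Gaussian density with mean μ₂ and variance σ₂² > 0, and suppose σ_h² := σ₂² + (α−1)σ₁² > 0. Then h_α(p;q) = (1/2) [ ln(2πσ₂²) + (1/(1−α)) ln(σ₂²/σ_h²) + (μ₁−μ₂)²/σ_h² ]. -/
open MeasureTheory

/-- The Gaussian probability density with mean `μ` and variance `v`. -/
noncomputable def gaussianPdf (μ v x : ℝ) : ℝ :=
  (1 / Real.sqrt (2 * Real.pi * v)) * Real.exp (-(x - μ) ^ 2 / (2 * v))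

/-- Rényi differential cross-entropy between two Gaussian densities: if `p` is Gaussian with
mean `μ₁`, variance `σ₁² > 0`, `q` is Gaussian with mean `μ₂`, variance `σ₂² > 0`, and
`σ_h² := σ₂² + (α-1)σ₁² > 0`, then
`h_α(p;q) = (1/2)[ln(2πσ₂²) + (1/(1-α)) ln(σ₂²/σ_h²) + (μ₁-μ₂)²/σ_h²]`. -/
theorem renyi_diff_cross_entropy_gaussian
    (α : ℝ) (hα : 0 < α) (hα1 : α ≠ 1)
    (μ₁ μ₂ v₁ v₂ : ℝ) (hv₁ : 0 < v₁) (hv₂ : 0 < v₂)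
    (vh : ℝ) (hvh_def : vh = v₂ + (α - 1) * v₁) (hvh : 0 < vh) :
    (1 / (1 - α)) * Real.log (∫ x : ℝ, gaussianPdf μ₁ v₁ x * gaussianPdf μ₂ v₂ x ^ (α - 1)) =
      (1 / 2) * (Real.log (2 * Real.pi * v₂) + (1 / (1 - α)) * Real.log (v₂ / vh) +
        (μ₁ - μ₂) ^ 2 / vh) := by
  have hpi := Real.pi_pos
  have hs₁ : 0 < Real.sqrt (2 * Real.pi * v₁) := Real.sqrt_pos.mpr (by positivity)
  have hs₂ : 0 < Real.sqrt (2 * Real.pi * v₂) := Real.sqrt_pos.mpr (by positivity)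
  have hα' : 1 - α ≠ 0 := sub_ne_zero.mpr (Ne.symm hα1)
  set C : ℝ := (1 / Real.sqrt (2 * Real.pi * v₁)) * (1 / Real.sqrt (2 * Real.pi * v₂)) ^ (α - 1) *
    Real.exp (-((α - 1) * (μ₁ - μ₂) ^ 2 / (2 * vh))) with hC
  set m : ℝ := (v₂ * μ₁ + (α - 1) * v₁ * μ₂) / vh with hm
  have key : ∀ x : ℝ, gaussianPdf μ₁ v₁ x * gaussianPdf μ₂ v₂ x ^ (α - 1) =
      C * Real.exp (-(vh / (2 * v₁ * v₂)) * (x - m) ^ 2) := by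
    intro x
    unfold gaussianPdf
    rw [Real.mul_rpow (by positivity) (Real.exp_pos _).le, ← Real.exp_mul, hC]
    have hexp : -(x - μ₁) ^ 2 / (2 * v₁) + -(x - μ₂) ^ 2 / (2 * v₂) * (α - 1) =
        -((α - 1) * (μ₁ - μ₂) ^ 2 / (2 * vh)) + -(vh / (2 * v₁ * v₂)) * (x - m) ^ 2 := by
      rw [hm]
      have h0 := hvh.ne'
      field_simp
      rw [hvh_def]
      ring
    have h2 := congrArg Real.exp hexp
    rw [Real.exp_add, Real.exp_add] at h2
    linear_combination (1 / Real.sqrt (2 * Real.pi * v₁)) *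
      (1 / Real.sqrt (2 * Real.pi * v₂)) ^ (α - 1) * h2
  have hint : (∫ x : ℝ, gaussianPdf μ₁ v₁ x * gaussianPdf μ₂ v₂ x ^ (α - 1)) =
      C * Real.sqrt (Real.pi / (vh / (2 * v₁ * v₂))) := by
    simp_rw [key]
    rw [integral_const_mul,
      integral_sub_right_eq_self (fun x : ℝ => Real.exp (-(vh / (2 * v₁ * v₂)) * x ^ 2)) m,
      integral_gaussian]
  have hlogC : Real.log C = -(1 / 2) * Real.log (2 * Real.pi * v₁)
      - (α - 1) / 2 * Real.log (2 * Real.pi * v₂) - (α - 1) * (μ₁ - μ₂) ^ 2 / (2 * vh) := by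
    rw [hC, Real.log_mul (by positivity) (by positivity), Real.log_mul (by positivity)
      (by positivity), Real.log_exp, Real.log_rpow (by positivity), one_div, one_div,
      Real.log_inv, Real.log_inv, Real.log_sqrt (by positivity), Real.log_sqrt (by positivity)]
    ring
  have hCpos : 0 < C := by positivity
  have hsplit : Real.pi / (vh / (2 * v₁ * v₂)) = (2 * Real.pi * v₁) * (v₂ / vh) := by
    field_simp
  rw [hint, hsplit, Real.log_mul hCpos.ne' (Real.sqrt_pos.mpr (by positivity)).ne',
    hlogC, Real.log_sqrt (by positivity),
    Real.log_mul (x := 2 * Real.pi * v₁) (y := v₂ / vh) (by positivity) (by positivity)]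
  have h0 := hvh.ne'
  generalize Real.log (2 * Real.pi * v₁) = A
  generalize Real.log (2 * Real.pi * v₂) = B
  generalize Real.log (v₂ / vh) = D
  field_simp
  ring
end

section
/- Let α > 0, α ≠ 1, let p be the exponential density with rate λ₁ > 0 and q the exponential density with rate λ₂ > 0, and suppose λ_h := λ₁ + (α−1)λ₂ > 0. Then h_α(p;q) = (1/(1−α)) ln(λ₁/λ_h) − ln λ₂. -/
open MeasureTheory

/-- Rényi differential cross-entropy between two exponential densities: if `p` has rate
`λ₁ > 0`, `q` has rate `λ₂ > 0`, and `λ_h := λ₁ + (α-1)λ₂ > 0`, then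
`h_α(p;q) = (1/(1-α)) ln(λ₁/λ_h) - ln λ₂`. -/
theorem renyi_diff_cross_entropy_exponential
    (α : ℝ) (hα : 0 < α) (hα1 : α ≠ 1)
    (l₁ l₂ : ℝ) (hl₁ : 0 < l₁) (hl₂ : 0 < l₂)
    (lh : ℝ) (hlh_def : lh = l₁ + (α - 1) * l₂) (hlh : 0 < lh) :
    (1 / (1 - α)) * Real.log (∫ x in Set.Ioi (0 : ℝ),
        (l₁ * Real.exp (-l₁ * x)) * (l₂ * Real.exp (-l₂ * x)) ^ (α - 1)) =
      (1 / (1 - α)) * Real.log (l₁ / lh) - Real.log l₂ := by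
  have hint : (∫ x in Set.Ioi (0 : ℝ),
        (l₁ * Real.exp (-l₁ * x)) * (l₂ * Real.exp (-l₂ * x)) ^ (α - 1))
      = (l₁ / lh) * l₂ ^ (α - 1) := by
    have hfun : ∀ x : ℝ, (l₁ * Real.exp (-l₁ * x)) * (l₂ * Real.exp (-l₂ * x)) ^ (α - 1)
        = (l₁ * l₂ ^ (α - 1)) * Real.exp (-lh * x) := by
      intro x
      have he : Real.exp (-lh * x)
          = Real.exp (-l₁ * x) * Real.exp (-l₂ * x * (α - 1)) := by
        rw [← Real.exp_add, hlh_def]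
        congr 1
        ring
      rw [Real.mul_rpow hl₂.le (Real.exp_pos _).le, ← Real.exp_mul, he]
      ring
    simp only [hfun]
    rw [integral_const_mul, integral_exp_mul_Ioi (neg_lt_zero.mpr hlh)]
    have := hlh.ne'
    simp
    field_simp
  have h1 : 1 - α ≠ 0 := sub_ne_zero.mpr hα1.symm
  rw [hint, Real.log_mul (div_pos hl₁ hlh).ne' (Real.rpow_pos_of_pos hl₂ _).ne',
    Real.log_rpow hl₂]
  field_simp
  ring
end

section
/- Let α > 0, α ≠ 1, let p be the Laplace density with location μ and scale b₁ > 0 and q the Laplace density with the same location μ and scale b₂ > 0, and suppose b_h := b₂ + (α−1)b₁ > 0. Then h_α(p;q) = ln(2b₂) + (1/(1−α)) ln(b₂/b_h). -/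
open MeasureTheory

/-- The Laplace probability density with location `μ` and scale `b`. -/
noncomputable def laplacePdf (μ b x : ℝ) : ℝ :=
  (1 / (2 * b)) * Real.exp (-|x - μ| / b)

/-- Rényi differential cross-entropy between two Laplace densities with common location `μ`:
if `p` has scale `b₁ > 0`, `q` has scale `b₂ > 0`, and `b_h := b₂ + (α-1)b₁ > 0`, then
`h_α(p;q) = ln(2b₂) + (1/(1-α)) ln(b₂/b_h)`. -/
theorem renyi_diff_cross_entropy_laplace
    (α : ℝ) (hα : 0 < α) (hα1 : α ≠ 1)
    (μ b₁ b₂ : ℝ) (hb₁ : 0 < b₁) (hb₂ : 0 < b₂)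
    (bh : ℝ) (hbh_def : bh = b₂ + (α - 1) * b₁) (hbh : 0 < bh) :
    (1 / (1 - α)) * Real.log (∫ x : ℝ, laplacePdf μ b₁ x * laplacePdf μ b₂ x ^ (α - 1)) =
      Real.log (2 * b₂) + (1 / (1 - α)) * Real.log (b₂ / bh) := by
  have hc : -(bh / (b₁ * b₂)) < 0 := by
    have : 0 < bh / (b₁ * b₂) := by positivity
    linarith
  have hpt : ∀ x : ℝ, laplacePdf μ b₁ x * laplacePdf μ b₂ x ^ (α - 1) =
      (1 / (2 * b₁) * (2 * b₂) ^ (1 - α)) * Real.exp (-(bh / (b₁ * b₂)) * |x - μ|) := by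
    intro x
    unfold laplacePdf
    rw [Real.mul_rpow (by positivity) (Real.exp_pos _).le, ← Real.exp_mul, one_div (2 * b₂),
      Real.inv_rpow (by positivity), ← Real.rpow_neg (by positivity), neg_sub]
    have h : Real.exp (-(bh / (b₁ * b₂)) * |x - μ|) =
        Real.exp (-|x - μ| / b₁) * Real.exp (-|x - μ| / b₂ * (α - 1)) := by
      rw [← Real.exp_add]
      congr 1
      rw [hbh_def]
      field_simp
      ring
    rw [h]
    ring
  have hint : ∫ x : ℝ, laplacePdf μ b₁ x * laplacePdf μ b₂ x ^ (α - 1) =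
      (2 * b₂) ^ (1 - α) * (b₂ / bh) := by
    simp_rw [hpt]
    rw [integral_const_mul,
      integral_sub_right_eq_self (fun x : ℝ => Real.exp (-(bh / (b₁ * b₂)) * |x|)) μ,
      integral_comp_abs (f := fun x => Real.exp (-(bh / (b₁ * b₂)) * x)),
      integral_exp_mul_Ioi hc, mul_zero, Real.exp_zero]
    field_simp
  have h1 : 1 - α ≠ 0 := sub_ne_zero.mpr hα1.symm
  rw [hint, Real.log_mul (by positivity) (by positivity), Real.log_rpow (by positivity)]
  field_simp
end

section
/- Let α > 0, α ≠ 1, let p be the Beta density with parameters a₁ > 0, b₁ > 0 and q the Beta density with parameters a₂ > 0, b₂ > 0, and suppose a_h := a₁ + (α−1)(a₂−1) > 0 and b_h := b₁ + (α−1)(b₂−1) > 0. Then h_α(p;q) = ln B(a₂,b₂) + (1/(1−α)) ln( B(a_h,b_h) / B(a₁,b₁) ), where B(a,b) = ∫_0^1 t^{a−1}(1−t)^{b−1} dt is the Beta function. -/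
open MeasureTheory

/-- The Beta function `B(a,b) = ∫_0^1 t^(a-1) (1-t)^(b-1) dt`. -/
noncomputable def betaFn (a b : ℝ) : ℝ :=
  ∫ t in Set.Ioo (0 : ℝ) 1, t ^ (a - 1) * (1 - t) ^ (b - 1)

/-- The Beta probability density with parameters `a, b` on `(0,1)`. -/
noncomputable def betaPdf (a b x : ℝ) : ℝ :=
  x ^ (a - 1) * (1 - x) ^ (b - 1) / betaFn a b

theorem betaFn_pos_aux {a b : ℝ} (ha : 0 < a) (hb : 0 < b) : 0 < betaFn a b := by
  have h : betaFn a b = ProbabilityTheory.beta a b := by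
    rw [ProbabilityTheory.beta_eq_betaIntegralReal a b ha hb]
    have h2 : Complex.betaIntegral a b = ((betaFn a b : ℝ) : ℂ) := by
      unfold Complex.betaIntegral betaFn
      rw [intervalIntegral.integral_of_le zero_le_one, integral_Ioc_eq_integral_Ioo,
        ← integral_complex_ofReal]
      refine setIntegral_congr_fun measurableSet_Ioo fun x hx => ?_
      have h0 : (0 : ℝ) ≤ x := hx.1.le
      have h1 : (0 : ℝ) ≤ 1 - x := by linarith [hx.2]
      push_cast [Complex.ofReal_cpow h0, Complex.ofReal_cpow h1]
      rfl
    rw [h2, Complex.ofReal_re]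
  rw [h]
  exact ProbabilityTheory.beta_pos ha hb

/-- Rényi differential cross-entropy between two Beta densities: if `p` has parameters
`a₁, b₁ > 0`, `q` has parameters `a₂, b₂ > 0`, and `a_h := a₁ + (α-1)(a₂-1) > 0`,
`b_h := b₁ + (α-1)(b₂-1) > 0`, then
`h_α(p;q) = ln B(a₂,b₂) + (1/(1-α)) ln(B(a_h,b_h)/B(a₁,b₁))`. -/
theorem renyi_diff_cross_entropy_beta
    (α : ℝ) (hα : 0 < α) (hα1 : α ≠ 1)
    (a₁ b₁ a₂ b₂ : ℝ) (ha₁ : 0 < a₁) (hb₁ : 0 < b₁) (ha₂ : 0 < a₂) (hb₂ : 0 < b₂)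
    (ah bh : ℝ) (hah_def : ah = a₁ + (α - 1) * (a₂ - 1)) (hbh_def : bh = b₁ + (α - 1) * (b₂ - 1))
    (hah : 0 < ah) (hbh : 0 < bh) :
    (1 / (1 - α)) * Real.log (∫ x in Set.Ioo (0 : ℝ) 1,
        betaPdf a₁ b₁ x * betaPdf a₂ b₂ x ^ (α - 1)) =
      Real.log (betaFn a₂ b₂) + (1 / (1 - α)) * Real.log (betaFn ah bh / betaFn a₁ b₁) := by
  have hB1 := betaFn_pos_aux ha₁ hb₁
  have hB2 := betaFn_pos_aux ha₂ hb₂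
  have hBh := betaFn_pos_aux hah hbh
  have key : (∫ x in Set.Ioo (0 : ℝ) 1, betaPdf a₁ b₁ x * betaPdf a₂ b₂ x ^ (α - 1)) =
      (betaFn ah bh / betaFn a₁ b₁) / betaFn a₂ b₂ ^ (α - 1) := by
    rw [div_div, betaFn.eq_def ah bh, ← integral_div]
    refine setIntegral_congr_fun measurableSet_Ioo fun x hx => ?_
    have h0 : (0 : ℝ) < x := hx.1
    have h1 : (0 : ℝ) < 1 - x := by linarith [hx.2]
    have e1 : ah - 1 = (a₁ - 1) + (a₂ - 1) * (α - 1) := by rw [hah_def]; ring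
    have e2 : bh - 1 = (b₁ - 1) + (b₂ - 1) * (α - 1) := by rw [hbh_def]; ring
    simp only [betaPdf]
    rw [Real.div_rpow (by positivity) hB2.le, Real.mul_rpow (by positivity) (by positivity),
      ← Real.rpow_mul h0.le, ← Real.rpow_mul h1.le, e1, e2, Real.rpow_add h0,
      Real.rpow_add h1, div_mul_div_comm]
    ring
  rw [key, Real.log_div (by positivity) (by positivity), Real.log_rpow hB2]
  have : 1 - α ≠ 0 := sub_ne_zero.mpr hα1.symm
  field_simp
  ring
end
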